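/- Let h : ℝ^d → ℝ be strictly convex, c(x,y) = h(x−y), and α, β absolutely continuous compactly supported probability measures on ℝ^d. Then there exists a unique (α-a.e.) minimizer T of ∫ c(x,T(x)) dα over maps with T_♯α = β. -/

import Mathlib

/-!
The transport map is read off from a maximizer of the Kantorovich dual problem, without passing
through transport plans or proving a duality theorem. Write `c(x,y) = h(x-y)` and
`ψᶜ(x) = inf_y (c(x,y) - ψ(y))`, the infimum being over the compact set `Kβ`, and let
`J(ψ) = ∫ ψᶜ dα + ∫ ψ dβ`.

* `J` has a maximizer `ψ` among continuous functions on `Kβ` (`exists_dual_maximizer`). Passing to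
  the double `c`-transform and subtracting a constant does not decrease `J` and turns any
  function into a normalized one with a Lipschitz bound depending only on `c`; such functions form
  a compact set by Arzelà–Ascoli, and `J` is continuous.
* `φ = ψᶜ` is Lipschitz on a ball containing `Kα`, hence differentiable `α`-a.e. by Rademacher's
  theorem. If `φ` is differentiable at `x`, the infimum defining `φ(x)` is attained at only one
  point `T(x)`: at a minimizer `y` the gradient `∇φ(x)` is a subgradient of `h` at `x - y`, and a
  strictly convex function has no common subgradient at two different points (`eq_of_touching`).
* Comparing `J(ψ)` with `J(ψ + ε η)` and letting `ε → 0` gives `∫ η dβ = ∫ η(T(x)) dα` for every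
  continuous `η` (`integral_comp_argmin`), so `T` pushes `α` to `β`.
* For every `S` pushing `α` to `β`, `∫ c(x,S(x)) dα ≥ ∫ (φ(x) + ψ(S(x))) dα = J(ψ)`, with equality
  for `S = T`. Equality forces `S(x)` to be a minimizer for a.e. `x`, so `S = T` a.e.
-/

open MeasureTheory
open Filter Topology Set

/-! ### The dual problem and its first variation -/

section Dual

variable {X Y : Type*}

/-- The `c`-transform `ψᶜ(x) = inf_y (c(x,y) - ψ(y))`. The real-valued infimum is meaningful for
continuous `c x` and `ψ` on a nonempty compact `Y`, where it is attained. -/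
noncomputable def cTransform (c : X → Y → ℝ) (ψ : Y → ℝ) (x : X) : ℝ := ⨅ y, (c x y - ψ y)

/-- The Kantorovich dual functional `J(ψ) = ∫ ψᶜ dμ + ∫ ψ dν`, whose first potential is taken to be
the `c`-transform of the second. -/
noncomputable def dualValue [MeasurableSpace X] [MeasurableSpace Y] (c : X → Y → ℝ) (μ : Measure X)
    (ν : Measure Y) (ψ : Y → ℝ) : ℝ :=
  (∫ x, cTransform c ψ x ∂μ) + ∫ y, ψ y ∂ν

theorem exists_cTransform_eq [TopologicalSpace Y] [CompactSpace Y] [Nonempty Y]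
    {c : X → Y → ℝ} (hc : ∀ x, Continuous (c x)) (ψ : C(Y, ℝ)) (x : X) :
    ∃ y, (∀ z, c x y - ψ y ≤ c x z - ψ z) ∧ cTransform c ψ x = c x y - ψ y := by
  obtain ⟨y, -, hy⟩ := (isCompact_univ (X := Y)).exists_isMinOn univ_nonempty
    (((hc x).sub ψ.continuous).continuousOn)
  have hy' : ∀ z, c x y - ψ y ≤ c x z - ψ z := fun z => hy (mem_univ z)
  refine ⟨y, hy', le_antisymm (ciInf_le ⟨c x y - ψ y, ?_⟩ y) (le_ciInf hy')⟩
  rintro _ ⟨z, rfl⟩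
  exact hy' z

theorem cTransform_le [TopologicalSpace Y] [CompactSpace Y] [Nonempty Y]
    {c : X → Y → ℝ} (hc : ∀ x, Continuous (c x)) (ψ : C(Y, ℝ)) (x : X) (y : Y) :
    cTransform c ψ x ≤ c x y - ψ y := by
  obtain ⟨z, hz, h⟩ := exists_cTransform_eq hc ψ x
  exact h ▸ hz y

theorem le_cTransform [Nonempty Y]
    {c : X → Y → ℝ} {ψ : Y → ℝ} {x : X} {a : ℝ} (h : ∀ y, a ≤ c x y - ψ y) :
    a ≤ cTransform c ψ x := le_ciInf h

theorem continuous_cTransform [TopologicalSpace X] [TopologicalSpace Y] [CompactSpace Y]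
    {c : X → Y → ℝ} (hc : Continuous (Function.uncurry c))
    (ψ : C(Y, ℝ)) : Continuous (cTransform c ψ) := by
  have := (isCompact_univ (X := Y)).continuous_sInf (f := fun x y => c x y - ψ y)
    (hc.sub (ψ.continuous.comp continuous_snd))
  simp only [image_univ] at this
  exact this

/-- Continuous functions are integrable for a finite measure carried by a compact set. -/
theorem integrable_of_carried [MetricSpace X] [MeasurableSpace X] [BorelSpace X]
    {μ : Measure X} [IsFiniteMeasure μ] {K : Set X}
    (hK : IsCompact K) (hμ : μ Kᶜ = 0) {f : X → ℝ} (hf : Continuous f) : Integrable f μ := by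
  have h1 := hf.continuousOn.integrableOn_compact (μ := μ) hK
  rwa [IntegrableOn, Measure.restrict_eq_self_of_ae_mem (mem_ae_iff.2 hμ)] at h1

/-- Arzelà–Ascoli for functions with a common Lipschitz constant and a common zero. -/
theorem isCompact_lipschitz_normalized [MetricSpace Y]
    (L : NNReal) (y₀ : Y) :
    IsCompact {ψ : C(Y, ℝ) | LipschitzWith L ψ ∧ ψ y₀ = 0} := by
  refine ArzelaAscoli.isCompact_of_equicontinuous _ ?_ ?_
  · have hcl : IsClosed {f : Y → ℝ | LipschitzWith L f ∧ f y₀ = 0} :=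
      (isClosed_setOfPred_lipschitzWith L).inter (isClosed_eq (continuous_apply y₀) continuous_const)
    have himg : ContinuousMap.toFun '' {ψ : C(Y, ℝ) | LipschitzWith L ψ ∧ ψ y₀ = 0}
        = {f : Y → ℝ | LipschitzWith L f ∧ f y₀ = 0} := by
      ext f
      constructor
      · rintro ⟨ψ, hψ, rfl⟩
        exact hψ
      · intro hf
        exact ⟨⟨f, hf.1.continuous⟩, hf, rfl⟩
    rw [himg]
    refine (isCompact_univ_pi (fun y : Y =>
      isCompact_closedBall (0 : ℝ) (L * dist y y₀))).of_isClosed_subset hcl ?_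
    intro f hf y _
    have := hf.1.dist_le_mul y y₀
    rwa [hf.2] at this
  · exact (LipschitzWith.uniformEquicontinuous _ L (fun ψ => ψ.2.1)).equicontinuous

/-- The dual functional has a maximizer among continuous functions. The bound `L` is only needed on
the set `K` carrying `μ`, since the double transform can be taken over `K`. -/
theorem exists_dual_maximizer [MetricSpace X] [MeasurableSpace X] [BorelSpace X]
    [MetricSpace Y] [CompactSpace Y] [Nonempty Y] [MeasurableSpace Y] [BorelSpace Y]
    {c : X → Y → ℝ} (hc : Continuous (Function.uncurry c))
    {μ : Measure X} {ν : Measure Y} [IsProbabilityMeasure μ] [IsProbabilityMeasure ν]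
    {K : Set X} (hK : IsCompact K) (hμ : μ Kᶜ = 0) {L : NNReal}
    (hL : ∀ x ∈ K, LipschitzWith L (c x)) :
    ∃ ψ : C(Y, ℝ), ∀ ψ' : C(Y, ℝ), dualValue c μ ν ψ' ≤ dualValue c μ ν ψ := by
  obtain ⟨y₀⟩ := ‹Nonempty Y›
  have hcx : ∀ x, Continuous (c x) := fun x => hc.comp (Continuous.prodMk_right x)
  have haeK : ∀ᵐ x ∂μ, x ∈ K := mem_ae_iff.2 hμ
  have hKne : Nonempty K := by
    obtain ⟨x, hx⟩ := haeK.exists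
    exact ⟨⟨x, hx⟩⟩
  have hintT : ∀ ψ : C(Y, ℝ), Integrable (cTransform c ψ) μ := fun ψ =>
    integrable_of_carried hK hμ (continuous_cTransform hc ψ)
  have hint : ∀ ψ : C(Y, ℝ), Integrable ψ ν := fun ψ =>
    integrable_of_carried isCompact_univ (by simp) ψ.continuous
  -- The dual value does not decrease if, up to a constant `a` for `ψ` and `-a` for its transform,
  -- both functions grow: the constants cancel because `μ` and `ν` have the same mass.
  have hshift : ∀ (ψ ψ' : C(Y, ℝ)) (a : ℝ), (∀ y, ψ y ≤ ψ' y + a) →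
      (∀ᵐ x ∂μ, cTransform c ψ x ≤ cTransform c ψ' x + (-a)) →
      dualValue c μ ν ψ ≤ dualValue c μ ν ψ' := by
    intro ψ ψ' a h1 h2
    have e1 := integral_mono (hint ψ) ((hint ψ').add (integrable_const a)) h1
    have e2 := integral_mono_ae (hintT ψ) ((hintT ψ').add (integrable_const (-a))) h2
    simp only [Pi.add_apply] at e1 e2
    rw [integral_add (hint ψ') (integrable_const a)] at e1
    rw [integral_add (hintT ψ') (integrable_const (-a))] at e2
    simp at e1 e2
    unfold dualValue
    linarith
  have hcont : Continuous (fun ψ : C(Y, ℝ) => dualValue c μ ν ψ) := by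
    refine (LipschitzWith.of_le_add_mul 2 fun ψ ψ' => ?_).continuous
    have hd : ∀ y, ψ y ≤ ψ' y + dist ψ ψ' ∧ ψ' y ≤ ψ y + dist ψ ψ' := fun y => by
      have := abs_le.1 (Real.dist_eq (ψ y) (ψ' y) ▸
        ContinuousMap.dist_apply_le_dist (f := ψ) (g := ψ') y)
      constructor <;> linarith
    have e1 := integral_mono (hint ψ) ((hint ψ').add (integrable_const (dist ψ ψ')))
      fun y => (hd y).1
    have e2 := integral_mono (hintT ψ) ((hintT ψ').add (integrable_const (dist ψ ψ')))
      fun x => by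
        obtain ⟨y, -, hy⟩ := exists_cTransform_eq hcx ψ' x
        have := cTransform_le hcx ψ x y
        have := (hd y).2
        simp only [Pi.add_apply]
        linarith
    simp only [Pi.add_apply] at e1 e2
    rw [integral_add (hint ψ') (integrable_const _)] at e1
    rw [integral_add (hintT ψ') (integrable_const _)] at e2
    simp at e1 e2
    unfold dualValue
    norm_num
    linarith
  obtain ⟨ψ, -, hψ⟩ := (isCompact_lipschitz_normalized L y₀).exists_isMaxOn
    ⟨0, LipschitzWith.const' _, rfl⟩ hcont.continuousOn
  refine ⟨ψ, fun ψ' => ?_⟩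
  set φ := cTransform c ψ' with hφ
  have hφle : ∀ x y, ψ' y ≤ c x y - φ x := fun x y => by
    have := cTransform_le hcx ψ' x y
    rw [hφ]; linarith
  -- The competitor is improved to its double transform `f`, taken over `K` so that it inherits the
  -- constant `L`.
  let f : Y → ℝ := fun y => ⨅ x : K, (c x y - φ x)
  have hfle : ∀ (x : K) y, f y ≤ c x y - φ x := fun x y =>
    ciInf_le ⟨ψ' y, by rintro _ ⟨x, rfl⟩; exact hφle x y⟩ x
  have hfL : LipschitzWith L f := LipschitzWith.of_le_add_mul L fun y z => by
    rw [← sub_le_iff_le_add]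
    refine le_ciInf fun x => ?_
    have h1 := hfle x y
    have h2 := (le_abs_self _).trans ((hL x x.2).dist_le_mul y z)
    linarith
  let ψ₂ : C(Y, ℝ) := ⟨fun y => f y - f y₀, hfL.continuous.sub continuous_const⟩
  have hmem : LipschitzWith L ψ₂ ∧ ψ₂ y₀ = 0 := by
    refine ⟨?_, by simp [ψ₂]⟩
    refine LipschitzWith.of_dist_le_mul fun y z => ?_
    have := hfL.dist_le_mul y z
    simpa [ψ₂] using this
  refine le_trans (hshift ψ' ψ₂ (f y₀) (fun y => ?_) ?_) (hψ hmem)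
  · have : ψ' y ≤ f y := le_ciInf fun x => hφle x y
    simpa [ψ₂] using this
  · filter_upwards [haeK] with x hx
    rw [← sub_le_iff_le_add]
    refine le_cTransform fun y => ?_
    have := hfle ⟨x, hx⟩ y
    simp only [ψ₂, ContinuousMap.coe_mk]
    linarith

/-- Berge's theorem at a point of uniqueness: any selection of minimizers over a compact space is
continuous at a parameter whose minimizer is unique. -/
theorem continuousAt_argmin [TopologicalSpace Y] [CompactSpace Y]
    {P : Type*} [TopologicalSpace P] {F : P → Y → ℝ}
    (hF : Continuous (Function.uncurry F)) {y : P → Y} (hy : ∀ p z, F p (y p) ≤ F p z) {p₀ : P}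
    (huniq : ∀ z, (∀ w, F p₀ z ≤ F p₀ w) → z = y p₀) : ContinuousAt y p₀ := by
  refine tendsto_nhds_of_unique_mapClusterPt fun z hz => huniq z fun w => ?_
  by_contra! hlt
  have hopen : IsOpen {q : P × Y | F q.1 w < F q.1 q.2} :=
    isOpen_lt (hF.comp (continuous_fst.prodMk continuous_const)) hF
  obtain ⟨u, hu, v, hv, huv⟩ := mem_nhds_prod_iff.1 (hopen.mem_nhds (x := (p₀, z)) hlt)
  obtain ⟨p, hpv, hpu⟩ := ((hz.frequently hv).and_eventually hu).exists
  exact absurd (hy p w) (not_le.2 (huv (mk_mem_prod hpu hpv)))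

/-- First variation of the dual functional at a maximizer `ψ`: if the minimizer `T x` of
`c x y - ψ y` is unique for a.e. `x`, the derivative of `ε ↦ (ψ + ε η)ᶜ(x)` at `0` is `-η (T x)`, so
optimality of `ψ` says that `T` transports `μ` to `ν` when tested against `η`. -/
theorem integral_comp_argmin [MetricSpace X] [MeasurableSpace X] [BorelSpace X]
    [MetricSpace Y] [CompactSpace Y] [Nonempty Y] [MeasurableSpace Y] [BorelSpace Y]
    {c : X → Y → ℝ} (hc : Continuous (Function.uncurry c))
    {μ : Measure X} {ν : Measure Y} [IsProbabilityMeasure μ] [IsProbabilityMeasure ν]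
    {K : Set X} (hK : IsCompact K) (hμ : μ Kᶜ = 0) {ψ : C(Y, ℝ)}
    (hψ : ∀ ψ' : C(Y, ℝ), dualValue c μ ν ψ' ≤ dualValue c μ ν ψ) {T : X → Y}
    (hT : ∀ x z, c x (T x) - ψ (T x) ≤ c x z - ψ z)
    (huniq : ∀ᵐ x ∂μ, ∀ y, (∀ z, c x y - ψ y ≤ c x z - ψ z) → y = T x) (η : C(Y, ℝ)) :
    ∫ y, η y ∂ν = ∫ x, η (T x) ∂μ := by
  have hcx : ∀ x, Continuous (c x) := fun x => hc.comp (Continuous.prodMk_right x)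
  have hintT : ∀ ψ : C(Y, ℝ), Integrable (cTransform c ψ) μ := fun ψ =>
    integrable_of_carried hK hμ (continuous_cTransform hc ψ)
  have hint : ∀ ψ : C(Y, ℝ), Integrable ψ ν := fun ψ =>
    integrable_of_carried isCompact_univ (by simp) ψ.continuous
  -- one inequality suffices, by replacing `η` with `-η`
  suffices key : ∀ η : C(Y, ℝ), ∫ y, η y ∂ν ≤ ∫ x, η (T x) ∂μ by
    refine le_antisymm (key η) ?_
    have := key (-η)
    simp only [ContinuousMap.neg_apply, integral_neg] at this
    linarith
  intro η
  have hφT : ∀ x, cTransform c ψ x = c x (T x) - ψ (T x) := fun x =>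
    le_antisymm (cTransform_le hcx ψ x _) (le_cTransform (hT x))
  let ε : ℕ → ℝ := fun n => 1 / ((n : ℝ) + 1)
  have hεpos : ∀ n, 0 < ε n := fun n => by positivity
  have hεlim : Tendsto ε atTop (𝓝 0) := tendsto_one_div_add_atTop_nhds_zero_nat
  -- difference quotients of the transform under the perturbation `ψ + ε η`
  let q : ℕ → X → ℝ := fun n x => (cTransform c ψ x - cTransform c (ψ + ε n • η : C(Y, ℝ)) x) / ε n
  have hlow : ∀ n x, η (T x) ≤ q n x := fun n x => by
    rw [le_div_iff₀ (hεpos n)]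
    have := cTransform_le hcx (ψ + ε n • η) x (T x)
    simp only [ContinuousMap.add_apply, ContinuousMap.smul_apply, smul_eq_mul] at this
    rw [hφT]; linarith
  have hup : ∀ n x y, cTransform c (ψ + ε n • η : C(Y, ℝ)) x = c x y - (ψ + ε n • η : C(Y, ℝ)) y →
      q n x ≤ η y := fun n x y h => by
    rw [div_le_iff₀ (hεpos n), h]
    have := cTransform_le hcx ψ x y
    simp
    linarith
  have hlim : ∀ᵐ x ∂μ, Tendsto (fun n => q n x) atTop (𝓝 (η (T x))) := by
    filter_upwards [huniq] with x hx
    choose y hy1 hy2 using fun t : ℝ => exists_cTransform_eq hcx (ψ + t • η) x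
    have hy0 : y 0 = T x := hx _ (by simpa using hy1 0)
    have hcontAt : ContinuousAt y 0 := by
      refine continuousAt_argmin (F := fun t z => c x z - (ψ + t • η : C(Y, ℝ)) z) ?_ hy1 ?_
      · simp only [Function.uncurry_def, ContinuousMap.add_apply, ContinuousMap.smul_apply,
          smul_eq_mul]
        have := hcx x
        fun_prop
      · intro z hz
        rw [hy0]
        exact hx z (by simpa using hz)
    have h3 : Tendsto (fun n => η (y (ε n))) atTop (𝓝 (η (T x))) := by
      rw [← hy0]
      exact (η.continuous.continuousAt.tendsto.comp hcontAt.tendsto).comp hεlim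
    exact tendsto_of_tendsto_of_tendsto_of_le_of_le tendsto_const_nhds h3
      (fun n => hlow n x) (fun n => hup n x _ (hy2 (ε n)))
  have hconv : Tendsto (fun n => ∫ x, q n x ∂μ) atTop (𝓝 (∫ x, η (T x) ∂μ)) := by
    refine tendsto_integral_of_dominated_convergence (fun _ => ‖η‖) ?_ (integrable_const _) ?_ hlim
    · intro n
      exact ((((continuous_cTransform hc ψ).sub
        (continuous_cTransform hc (ψ + ε n • η))).div_const _).measurable).aestronglyMeasurable
    · intro n
      refine Eventually.of_forall fun x => ?_
      obtain ⟨y, -, hy⟩ := exists_cTransform_eq hcx (ψ + ε n • η) x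
      have h1 := abs_le.1 (η.norm_coe_le_norm (T x))
      have h2 := abs_le.1 (η.norm_coe_le_norm y)
      exact abs_le.2 ⟨h1.1.trans (hlow n x), (hup n x y hy).trans h2.2⟩
  refine ge_of_tendsto' hconv fun n => ?_
  have h1 := hψ (ψ + ε n • η)
  have h2 : ∫ y, (ψ + ε n • η : C(Y, ℝ)) y ∂ν = ∫ y, ψ y ∂ν + ε n * ∫ y, η y ∂ν := by
    simp only [ContinuousMap.add_apply, ContinuousMap.smul_apply, smul_eq_mul]
    rw [integral_add (hint ψ) ((hint η).const_mul _), integral_const_mul]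
  have h3 : ∫ x, q n x ∂μ
      = (∫ x, cTransform c ψ x ∂μ - ∫ x, cTransform c (ψ + ε n • η : C(Y, ℝ)) x ∂μ) / ε n := by
    rw [← integral_sub (hintT _) (hintT _), ← integral_div]
  rw [h3, le_div_iff₀ (hεpos n)]
  unfold dualValue at h1
  rw [h2] at h1
  linarith

end Dual

/-! ### Differentiability and strict convexity determine the minimizer -/

section Convex

variable {E : Type*} [NormedAddCommGroup E] [NormedSpace ℝ E]

/-- If `z ↦ h (z - y) - φ z` is minimal at a differentiability point `x` of `φ`, then the derivative
of `φ` at `x` is a subgradient of `h` at `x - y`. -/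
theorem fderiv_le_of_touching {h φ : E → ℝ} (hconv : ConvexOn ℝ univ h) {x y : E}
    (hφ : DifferentiableAt ℝ φ x) (htouch : ∀ z, φ z - φ x ≤ h (z - y) - h (x - y)) (v : E) :
    fderiv ℝ φ x v ≤ h (x - y + v) - h (x - y) := by
  have hd : HasLineDerivAt ℝ φ (fderiv ℝ φ x v) x v := hφ.hasFDerivAt.hasLineDerivAt v
  refine le_of_tendsto hd.tendsto_slope_zero_right ?_
  filter_upwards [Ioo_mem_nhdsGT (zero_lt_one (α := ℝ))] with t ht
  have h1 := htouch (x + t • v)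
  have h2 := hconv.2 (mem_univ (x - y)) (mem_univ (x - y + v)) (sub_nonneg.2 ht.2.le) ht.1.le
    (by ring)
  have h3 : (1 - t) • (x - y) + t • (x - y + v) = x + t • v - y := by module
  rw [h3] at h2
  simp only [smul_eq_mul] at h2 ⊢
  rw [inv_mul_le_iff₀ ht.1]
  linarith

/-- A strictly convex `h` can touch `φ` from above, at a differentiability point of `φ`, with only one
translate: two would give a common subgradient at `x - y₁` and `x - y₂`, which the midpoint
contradicts. -/
theorem eq_of_touching {h φ : E → ℝ} (hconv : StrictConvexOn ℝ univ h) {x y₁ y₂ : E}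
    (hφ : DifferentiableAt ℝ φ x) (h₁ : ∀ z, φ z - φ x ≤ h (z - y₁) - h (x - y₁))
    (h₂ : ∀ z, φ z - φ x ≤ h (z - y₂) - h (x - y₂)) : y₁ = y₂ := by
  by_contra hne
  have hne' : x - y₁ ≠ x - y₂ := fun h => hne (sub_right_injective h)
  have hcv := hconv.convexOn
  obtain ⟨-, hstrict⟩ := hconv
  have hs := hstrict (mem_univ (x - y₁)) (mem_univ (x - y₂)) hne' (a := 1 / 2) (b := 1 / 2)
    (by norm_num) (by norm_num) (by norm_num)
  have e1 := fderiv_le_of_touching hcv hφ h₁ ((1 / 2 : ℝ) • (y₁ - y₂))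
  have e2 := fderiv_le_of_touching hcv hφ h₂ (-((1 / 2 : ℝ) • (y₁ - y₂)))
  have m1 : x - y₁ + (1 / 2 : ℝ) • (y₁ - y₂) = (1 / 2 : ℝ) • (x - y₁) + (1 / 2 : ℝ) • (x - y₂) := by
    module
  have m2 : x - y₂ + -((1 / 2 : ℝ) • (y₁ - y₂))
      = (1 / 2 : ℝ) • (x - y₁) + (1 / 2 : ℝ) • (x - y₂) := by
    module
  rw [m1] at e1
  rw [m2, map_neg] at e2
  simp only [smul_eq_mul] at hs
  linarith

theorem exists_lipschitzOnWith_ball [FiniteDimensional ℝ E] {h : E → ℝ}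
    (hconv : ConvexOn ℝ univ h) (R : ℝ) :
    ∃ L, LipschitzOnWith L h (Metric.ball 0 R) := by
  have hc : Continuous h := hconv.locallyLipschitz.continuous
  refine (hconv.subset (subset_univ _) (convex_ball 0 (R + 1))).exists_lipschitzOnWith_of_isBounded
    (lt_add_one R) ?_
  have := FiniteDimensional.proper_real E
  exact ((isCompact_closedBall (0 : E) (R + 1)).image hc).isBounded.subset
    (image_mono Metric.ball_subset_closedBall)

end Convex

/-! ### Construction of the map -/

/-- Existence and α-a.e. uniqueness of the Monge optimal transport map for a cost
`c(x,y) = h(x-y)` with `h` strictly convex, between absolutely continuous compactly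
supported probability measures (Santambrogio, Theorem 1.17). -/
theorem stmt_10 {d : ℕ} (h : EuclideanSpace ℝ (Fin d) → ℝ)
    (hconv : StrictConvexOn ℝ Set.univ h)
    (α β : Measure (EuclideanSpace ℝ (Fin d)))
    [IsProbabilityMeasure α] [IsProbabilityMeasure β]
    (hαac : α ≪ volume) (hβac : β ≪ volume)
    (Kα Kβ : Set (EuclideanSpace ℝ (Fin d)))
    (hKα : IsCompact Kα) (hKβ : IsCompact Kβ)
    (hαsupp : α Kαᶜ = 0) (hβsupp : β Kβᶜ = 0) :
    ∃ T : EuclideanSpace ℝ (Fin d) → EuclideanSpace ℝ (Fin d),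
      Measurable T ∧ α.map T = β ∧
      (∀ S : EuclideanSpace ℝ (Fin d) → EuclideanSpace ℝ (Fin d),
        Measurable S → α.map S = β →
        (∫ x, h (x - T x) ∂α) ≤ ∫ x, h (x - S x) ∂α) ∧
      (∀ T' : EuclideanSpace ℝ (Fin d) → EuclideanSpace ℝ (Fin d),
        Measurable T' → α.map T' = β →
        (∫ x, h (x - T' x) ∂α) = (∫ x, h (x - T x) ∂α) →
        T' =ᵐ[α] T) := by
  have hh : Continuous h := hconv.convexOn.locallyLipschitz.continuous
  have haeα : ∀ᵐ x ∂α, x ∈ Kα := mem_ae_iff.2 hαsupp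
  have haeβ : ∀ᵐ y ∂β, y ∈ Kβ := mem_ae_iff.2 hβsupp
  have : CompactSpace Kβ := isCompact_iff_compactSpace.1 hKβ
  have : Nonempty Kβ := by
    obtain ⟨y, hy⟩ := haeβ.exists
    exact ⟨⟨y, hy⟩⟩
  have hemb : MeasurableEmbedding (Subtype.val : Kβ → EuclideanSpace ℝ (Fin d)) :=
    MeasurableEmbedding.subtype_coe hKβ.measurableSet
  let ν : Measure Kβ := β.comap Subtype.val
  have hνβ : ν.map Subtype.val = β := by
    rw [map_comap_subtype_coe hKβ.measurableSet, Measure.restrict_eq_self_of_ae_mem haeβ]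
  have : IsProbabilityMeasure ν := by
    refine ⟨?_⟩
    have : ν.map Subtype.val univ = 1 := by rw [hνβ]; exact measure_univ
    rwa [Measure.map_apply measurable_subtype_coe MeasurableSet.univ] at this
  let c : EuclideanSpace ℝ (Fin d) → Kβ → ℝ := fun x y => h (x - y)
  have hc : Continuous (Function.uncurry c) := by
    simp only [c, Function.uncurry_def]
    fun_prop
  have hcx : ∀ x, Continuous (c x) := fun x => hc.comp (Continuous.prodMk_right x)
  obtain ⟨R, hR⟩ := (hKα.union hKβ).isBounded.subset_ball 0
  obtain ⟨L, hL⟩ := exists_lipschitzOnWith_ball hconv.convexOn (R + R)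
  have hsub : ∀ x ∈ Metric.ball (0 : EuclideanSpace ℝ (Fin d)) R, ∀ y : Kβ,
      x - y ∈ Metric.ball (0 : EuclideanSpace ℝ (Fin d)) (R + R) := fun x hx y => by
    have hy := hR (Or.inr y.2)
    rw [mem_ball_zero_iff] at hx hy ⊢
    exact (norm_sub_le _ _).trans_lt (add_lt_add hx hy)
  obtain ⟨ψ, hψ⟩ := exists_dual_maximizer (c := c) hc (μ := α) (ν := ν) hKα hαsupp (L := L)
    fun x hx => LipschitzWith.of_dist_le_mul fun y z => by
      have := hL.dist_le_mul _ (hsub x (hR (Or.inl hx)) y) _ (hsub x (hR (Or.inl hx)) z)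
      rwa [dist_sub_left] at this
  set φ := cTransform c ψ with hφ
  have hφle : ∀ x y, φ x ≤ c x y - ψ y := cTransform_le hcx ψ
  have hφL : LipschitzOnWith L φ (Metric.ball 0 R) :=
    LipschitzOnWith.of_le_add_mul L fun x hx z hz => by
      obtain ⟨y, -, hy⟩ := exists_cTransform_eq hcx ψ z
      have h1 := hφle x y
      have h2 := (le_abs_self _).trans (hL.dist_le_mul _ (hsub x hx y) _ (hsub z hz y))
      rw [dist_sub_right] at h2
      rw [hφ, hy, ← hφ]
      simp only [c] at h1 ⊢
      linarith
  have hdiff : ∀ᵐ x ∂α, DifferentiableAt ℝ φ x := by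
    filter_upwards [haeα, hαac.ae_le (hφL.ae_differentiableWithinAt_of_mem (μ := volume))]
      with x hx hd
    have hx' := hR (Or.inl hx)
    exact (hd hx').differentiableAt (Metric.isOpen_ball.mem_nhds hx')
  choose T hT hTφ using exists_cTransform_eq hcx ψ
  have huniqD : ∀ x, DifferentiableAt ℝ φ x → ∀ y : Kβ, φ x = c x y - ψ y → y = T x := by
    intro x hx y hy
    have aux : ∀ y : Kβ, φ x = c x y - ψ y →
        ∀ z, φ z - φ x ≤ h (z - y) - h (x - y) := fun y hy z => by
      have := hφle z y
      simp only [c] at this hy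
      linarith
    exact Subtype.ext (eq_of_touching hconv hx (aux y hy) (aux (T x) (hTφ x)))
  have hmin : ∀ x (y : Kβ), (∀ z, c x y - ψ y ≤ c x z - ψ z) → φ x = c x y - ψ y :=
    fun x y hy => le_antisymm (hφle x y) (le_cTransform hy)
  have hTm : AEMeasurable T α := by
    have hcont : ContinuousOn T {x | DifferentiableAt ℝ φ x} := fun x hx => by
      refine (continuousAt_argmin (F := fun x z => c x z - ψ z) ?_ hT fun z hz =>
        huniqD x hx z (hmin x z hz)).continuousWithinAt
      exact hc.sub (ψ.continuous.comp continuous_snd)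
    have := hcont.aemeasurable (μ := α) (measurableSet_of_differentiableAt ℝ φ)
    rwa [Measure.restrict_eq_self_of_ae_mem (s := {x | DifferentiableAt ℝ φ x}) hdiff] at this
  -- `T` chooses a minimizer arbitrarily off the differentiability set, so it must be modified on a
  -- null set to become measurable
  let T₀ := hTm.mk T
  have hT₀m : Measurable T₀ := hTm.measurable_mk
  have hTT₀ : T =ᵐ[α] T₀ := hTm.ae_eq_mk
  have hT₀map : α.map T₀ = ν := by
    refine ext_of_forall_integral_eq_of_IsFiniteMeasure fun η => ?_
    rw [integral_map hT₀m.aemeasurable η.continuous.measurable.aestronglyMeasurable]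
    have := integral_comp_argmin hc hKα hαsupp hψ hT
      (hdiff.mono fun x hx y hy => huniqD x hx y (hmin x y hy)) η.toContinuousMap
    refine Eq.trans (integral_congr_ae ?_) this.symm
    filter_upwards [hTT₀] with x hx
    rw [hx]; rfl
  -- any map pushing `α` to `β` agrees a.e. with a `Kβ`-valued one
  have hlift : ∀ S : EuclideanSpace ℝ (Fin d) → EuclideanSpace ℝ (Fin d), Measurable S →
      α.map S = β → ∃ S' : EuclideanSpace ℝ (Fin d) → Kβ, Measurable S' ∧ α.map S' = ν ∧
        ∀ᵐ x ∂α, S x = S' x := by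
    intro S hS hSβ
    obtain ⟨g, hg, hgv⟩ := hemb.exists_measurable_extend measurable_id (fun _ => ‹Nonempty Kβ›)
    refine ⟨g ∘ S, hg.comp hS, ?_, ?_⟩
    · rw [← Measure.map_map hg hS, hSβ, ← hνβ, Measure.map_map hg hemb.measurable, hgv,
        Measure.map_id]
    · have hSmem : ∀ᵐ x ∂α, S x ∈ Kβ := ae_of_ae_map hS.aemeasurable (hSβ ▸ haeβ)
      filter_upwards [hSmem] with x hx
      exact congrArg Subtype.val (congrFun hgv ⟨S x, hx⟩).symm
  have hintφ : Integrable φ α := integrable_of_carried hKα hαsupp (continuous_cTransform hc ψ)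
  obtain ⟨M, hM⟩ := (hKα.prod (isCompact_univ (X := Kβ))).exists_bound_of_continuousOn
    hc.continuousOn
  have hintc : ∀ S : EuclideanSpace ℝ (Fin d) → Kβ, Measurable S →
      Integrable (fun x => c x (S x)) α := fun S hS => by
    refine Integrable.of_bound (hc.measurable.comp (measurable_id.prodMk hS)).aestronglyMeasurable
      M ?_
    filter_upwards [haeα] with x hx
    exact hM (x, S x) ⟨hx, mem_univ _⟩
  have hintψ : ∀ S : EuclideanSpace ℝ (Fin d) → Kβ, Measurable S →
      Integrable (fun x => ψ (S x)) α := fun S hS =>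
    Integrable.of_bound (ψ.continuous.measurable.comp hS).aestronglyMeasurable ‖ψ‖
      (Eventually.of_forall fun x => ψ.norm_coe_le_norm _)
  have hdual : ∀ S : EuclideanSpace ℝ (Fin d) → Kβ, Measurable S → α.map S = ν →
      ∫ x, (φ x + ψ (S x)) ∂α = dualValue c α ν ψ := fun S hS hSν => by
    rw [integral_add hintφ (hintψ S hS), dualValue, ← hSν,
      integral_map hS.aemeasurable ψ.continuous.measurable.aestronglyMeasurable]
  have hT₀cost : ∫ x, c x (T₀ x) ∂α = dualValue c α ν ψ := by
    rw [← hdual T₀ hT₀m hT₀map]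
    refine integral_congr_ae ?_
    filter_upwards [hTT₀] with x hx
    rw [← hx, hφ, hTφ]
    ring
  have hle : ∀ (S : EuclideanSpace ℝ (Fin d) → Kβ) x, φ x + ψ (S x) ≤ c x (S x) := fun S x => by
    have := hφle x (S x)
    linarith
  refine ⟨fun x => T₀ x, measurable_subtype_coe.comp hT₀m, ?_, ?_, ?_⟩
  · have := Measure.map_map (μ := α) measurable_subtype_coe hT₀m
    rw [hT₀map, hνβ] at this
    exact this.symm
  · intro S hS hSβ
    obtain ⟨S', hS', hS'ν, hSS'⟩ := hlift S hS hSβ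
    have e : ∫ x, h (x - S x) ∂α = ∫ x, c x (S' x) ∂α :=
      integral_congr_ae (hSS'.mono fun x hx => by simp only [c, hx])
    rw [e]
    refine hT₀cost.le.trans ?_
    rw [← hdual S' hS' hS'ν]
    exact integral_mono (hintφ.add (hintψ S' hS')) (hintc S' hS') (hle S')
  · intro S hS hSβ hcost
    obtain ⟨S', hS', hS'ν, hSS'⟩ := hlift S hS hSβ
    have e : ∫ x, h (x - S x) ∂α = ∫ x, c x (S' x) ∂α :=
      integral_congr_ae (hSS'.mono fun x hx => by simp only [c, hx])
    have heq : ∫ x, (φ x + ψ (S' x)) ∂α = ∫ x, c x (S' x) ∂α := by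
      rw [hdual S' hS' hS'ν, ← e, hcost]
      exact hT₀cost.symm
    have hae := (integral_eq_iff_of_ae_le (hintφ.add (hintψ S' hS')) (hintc S' hS')
      (Eventually.of_forall (hle S'))).1 heq
    filter_upwards [hae, hSS', hTT₀, hdiff] with x h1 h2 h3 h4
    simp only [Pi.add_apply] at h1
    rw [h2, ← h3, huniqD x h4 (S' x) (by linarith)]
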